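/- For every first-order formula φ(x,y) in the language of graphs, every first-order formula δ(x), and every natural number d, there exist natural numbers s and r such that the following holds. Let G be a finite graph on which φ has VC-dimension at most d and such that G ⊨ φ(u,v) iff G ⊨ φ(v,u) for all u,v; let U = {v ∈ V(G) : G ⊨ δ(v)}, and let H be the graph with vertex set U in which distinct u,v ∈ U are adjacent iff G ⊨ φ(u,v). Then there exist a set S ⊆ U with |S| ≤ s and a symmetric relation R on the powerset of S such that the graph F with vertex set U, in which distinct u,v ∈ U are adjacent iff exactly one of "uv ∈ E(H)" and "(N_H(u) ∩ S, N_H(v) ∩ S) ∈ R" holds, satisfies: every edge uv of F has dist^G(u,v) ≤ r. (Thus F is a 2^s-flip of H guarded by S, all of whose edges join vertices at G-distance at most r.) -/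

import Mathlib

open FirstOrder

/-!
By induction on formulas, with a back-and-forth argument for quantifiers, the vertices of `G` can be
coloured with boundedly many colours such that, for vertices `u` and `v` at large distance, whether
`φ(u,v)` holds only depends on the colours of `u` and `v`. It thus suffices to find a bounded set
`S ⊆ U` such that, for far pairs `u, v` and `u', v'` with `N(u) ∩ S = N(u') ∩ S` and
`N(v) ∩ S = N(v') ∩ S`, adjacency of `u` and `v` implies adjacency of `u'` and `v'`: then flip all
pairs of traces on `S` that are left by some far adjacent pair.

If the colour of `v` occurs on some `w ∈ S` far from `u` and `u'`, and the colour of `u'` on some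
`w' ∈ S` far from `v` and `v'`, then the adjacencies `uv`, `uw`, `u'w`, `vw'`, `v'w'` and `u'v'` are
all equivalent. A colour class containing three far apart vertices is served by putting them into
`S`. Otherwise it is covered by two balls, and the critical case is that `u'` is near `v`.
There, bounded VC-dimension enters: by the minimax theorem and `ε`-nets, for all `A, B ⊆ U` there is
a bounded `S` such that every vertex of `A` has a non-neighbour in `B ∩ S` or every vertex of `B`
has a neighbour in `A ∩ S`. Apply this to suitable sets `A ∋ u'` and `B ∋ v` of vertices near `u'`
and `v` with the colours of `u'` and `v`. Since `u` is far from all of `B` and `v'` is far from all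
of `A`, the first case and `N(u) ∩ S = N(u') ∩ S` contradict the adjacency of `u` and `v`, and the
second case and `N(v) ∩ S = N(v') ∩ S` give the adjacency of `u'` and `v'`.
-/

universe u

namespace GraphFlip

/-- `u` and `v` are at distance at most `n` in `G`. Unlike for `SimpleGraph.dist`, vertices in
different components are never near. -/
def Near {V : Type*} (G : SimpleGraph V) (n : ℕ) (u v : V) : Prop := G.edist u v ≤ (n : ℕ∞)

namespace Near

variable {V : Type*} {G : SimpleGraph V} {m n k : ℕ} {u v w : V}

lemma refl (G : SimpleGraph V) (n : ℕ) (u : V) : Near G n u u := by simp [Near]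

lemma symm (h : Near G n u v) : Near G n v u := by
  rwa [Near, SimpleGraph.edist_comm]

lemma trans (huv : Near G n u v) (hvw : Near G m v w) (hk : n + m ≤ k) : Near G k u w :=
  calc G.edist u w ≤ G.edist u v + G.edist v w := G.edist_triangle
    _ ≤ (n : ℕ∞) + m := add_le_add huv hvw
    _ ≤ k := mod_cast hk

lemma mono (h : Near G n u v) (hk : n ≤ k) : Near G k u v := h.trans (refl G 0 v) hk

end Near

section Locality

/-! ### Locality of first-order formulas -/

/-- The entries of the tuple `x` lying in distinct parts of the partition of the index set into
the fibres of `π` are at distance greater than `r`. -/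
def Separated {V ι κ : Type*} (G : SimpleGraph V) (r : ℕ) (π : ι → κ) (x : ι → V) : Prop :=
  ∀ i j, π i ≠ π j → ¬ Near G r (x i) (x j)

lemma Separated.mono {V ι κ : Type*} {G : SimpleGraph V} {r s : ℕ} {π : ι → κ} {x : ι → V}
    (h : Separated G s π x) (hrs : r ≤ s) : Separated G r π x :=
  fun i j hij hn => h i j hij (hn.mono hrs)

/-- A colouring of the subtuples of `ι`-tuples in `G` (`color I x` is the colour of the restriction
of `x` to `I`) such that, whenever the tuple splits into parts at distance greater than `r`, the
colours of the parts determine whether `P` holds. -/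
structure PartColoring {V : Type u} {ι : Type} (G : SimpleGraph V) (r : ℕ) (P : (ι → V) → Prop)
    (K : Type) where
  color : Set ι → (ι → V) → K
  dependsOn (I : Set ι) : DependsOn (color I) I
  iff_of_color_eq {κ : Type} (π : ι → κ) {x y : ι → V} (hx : Separated G r π x)
    (hy : Separated G r π y) (hxy : ∀ j, color (π ⁻¹' {j}) x = color (π ⁻¹' {j}) y) : P x ↔ P y

/-- A property of tuples in graphs is decomposable if it is determined by finitely many colours of
the parts of sufficiently spread out tuples, with the number of colours and the spread independent
of the graph. -/
def IsDecomposable {ι : Type} (P : ∀ {V : Type u}, SimpleGraph V → (ι → V) → Prop) : Prop :=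
  ∃ (r : ℕ) (K : Type), Finite K ∧
    ∀ (V : Type u) (G : SimpleGraph V), Nonempty (PartColoring G r (P G) K)

namespace IsDecomposable

variable {ι ι' : Type} {P Q : ∀ {V : Type u}, SimpleGraph V → (ι → V) → Prop}

lemma false : IsDecomposable.{u} (fun {V} _ (_ : ι → V) => False) :=
  ⟨0, Unit, inferInstance, fun _ _ => ⟨⟨fun _ _ => (), by simp [DependsOn], by simp⟩⟩⟩

lemma of_near_one (Q : ∀ {V : Type u}, SimpleGraph V → V → V → Prop)
    (hQ : ∀ {V : Type u} (G : SimpleGraph V) u v, Q G u v → Near G 1 u v) (i j : ι) :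
    IsDecomposable.{u} (fun G x => Q G (x i) (x j)) := by
  refine ⟨1, Prop, inferInstance, fun V G =>
    ⟨⟨fun I x => i ∈ I ∧ j ∈ I ∧ Q G (x i) (x j), fun I x y h => ?_, ?_⟩⟩⟩
  · refine propext (and_congr_right fun hi => and_congr_right fun hj => ?_)
    rw [h i hi, h j hj]
  · intro κ π x y hx hy hxy
    by_cases hij : π i = π j
    · simpa [hij] using iff_of_eq (hxy (π i))
    · exact iff_of_false (fun h => hx i j hij (hQ G _ _ h)) (fun h => hy i j hij (hQ G _ _ h))

lemma imp (hP : IsDecomposable P) (hQ : IsDecomposable Q) :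
    IsDecomposable (fun G x => P G x → Q G x) := by
  obtain ⟨r, K, _, hP⟩ := hP
  obtain ⟨s, L, _, hQ⟩ := hQ
  refine ⟨max r s, K × L, inferInstance, fun V G => ?_⟩
  obtain ⟨c⟩ := hP V G
  obtain ⟨d⟩ := hQ V G
  refine ⟨⟨fun I x => (c.color I x, d.color I x),
    fun I x y h => Prod.ext (c.dependsOn I h) (d.dependsOn I h), fun π x y hx hy hxy => ?_⟩⟩
  exact imp_congr
    (c.iff_of_color_eq π (hx.mono (le_max_left r s)) (hy.mono (le_max_left r s))
      fun j => congrArg Prod.fst (hxy j))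
    (d.iff_of_color_eq π (hx.mono (le_max_right r s)) (hy.mono (le_max_right r s))
      fun j => congrArg Prod.snd (hxy j))

lemma comp (f : ι → ι') (hP : IsDecomposable P) : IsDecomposable (fun G x => P G (x ∘ f)) := by
  obtain ⟨r, K, hK, hP⟩ := hP
  refine ⟨r, K, hK, fun V G => ?_⟩
  obtain ⟨c⟩ := hP V G
  exact ⟨⟨fun I x => c.color (f ⁻¹' I) (x ∘ f), fun I x y h => c.dependsOn _ fun i hi => h _ hi,
    fun π x y hx hy hxy => c.iff_of_color_eq (π ∘ f) (fun i j => hx _ _) (fun i j => hy _ _) hxy⟩⟩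

end IsDecomposable

lemma exists_cells_cover_or_forall_exists_far {V ι : Type*} (G : SimpleGraph V) (r : ℕ)
    (C : Set V) : ∃ B : ι → Set V, (∀ i, ∀ a ∈ B i, ∀ b ∈ B i, Near G (2 * r) a b) ∧
      ((∀ a ∈ C, ∃ i, a ∈ B i) ∨ ∀ x : ι → V, ∃ a ∈ C, ∀ i, ¬ Near G r (x i) a) := by
  by_cases h : ∃ z : ι → V, ∀ a ∈ C, ∃ i, Near G r (z i) a
  · obtain ⟨z, hz⟩ := h
    exact ⟨fun i => {a | Near G r (z i) a},
      fun i a ha b hb => Near.trans (Near.symm ha) hb (by omega), Or.inl hz⟩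
  · push Not at h
    exact ⟨fun _ => ∅, by simp, Or.inr h⟩

lemma exists_near_congr {V ι : Type*} {G : SimpleGraph V} {r : ℕ} {I : Set ι} {x y : ι → V}
    (h : ∀ i ∈ I, x i = y i) (a : V) :
    (∃ i ∈ I, Near G r (x i) a) ↔ ∃ i ∈ I, Near G r (y i) a :=
  exists_congr fun i => and_congr_right fun hi => by rw [h i hi]

namespace PartColoring

variable {V : Type u} {ι K : Type} {G : SimpleGraph V} {r : ℕ} {P : (Option ι → V) → Prop}
  (c : PartColoring G r P K)

/-- The colour of the single vertex `a` in the position quantified over. -/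
def vertexColor (a : V) : K := c.color {none} fun _ => a

/-- The colour of the part `I` of `x` itself; a singleton, except that it is empty if there are no
vertices. -/
def baseColors (I : Set ι) (x : ι → V) : Set K :=
  Set.range fun a => c.color (some '' I) (Option.elim' a x)

/-- The colours of the extensions of the part `I` of `x` by a vertex near it. -/
def nearColors (I : Set ι) (x : ι → V) : Set K :=
  {k | ∃ a, (∃ i ∈ I, Near G r (x i) a) ∧ c.color (insert none (some '' I)) (Option.elim' a x) = k}

/-- Given cells `B k p`, the pairs `(k, p)` such that all vertices of colour `k` in the cell `B k p`
are near the part `I` of `x`. -/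
def coveredCells (B : K → ι → Set V) (I : Set ι) (x : ι → V) : Set (K × ι) :=
  {q | ∀ a ∈ B q.1 q.2, c.vertexColor a = q.1 → ∃ i ∈ I, Near G r (x i) a}

lemma color_singleton_none (x : ι → V) (a : V) :
    c.color {none} (Option.elim' a x) = c.vertexColor a :=
  c.dependsOn _ (by simp)

lemma color_some_image_congr {I : Set ι} {x y : ι → V} (h : ∀ i ∈ I, x i = y i) (a b : V) :
    c.color (some '' I) (Option.elim' a x) = c.color (some '' I) (Option.elim' b y) :=
  c.dependsOn _ (by simpa using h)

lemma color_some_image_eq_of_baseColors_eq {I : Set ι} {x y : ι → V}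
    (h : c.baseColors I x = c.baseColors I y) (a b : V) :
    c.color (some '' I) (Option.elim' a x) = c.color (some '' I) (Option.elim' b y) := by
  obtain ⟨a', ha'⟩ : c.color (some '' I) (Option.elim' b y) ∈ c.baseColors I x := h ▸ ⟨b, rfl⟩
  exact (c.color_some_image_congr (fun _ _ => rfl) a a').trans ha'

lemma dependsOn_baseColors (I : Set ι) : DependsOn (c.baseColors I) I := fun _ _ h =>
  congrArg Set.range (funext fun a => c.color_some_image_congr h a a)

lemma dependsOn_nearColors (I : Set ι) : DependsOn (c.nearColors I) I := fun x y h => by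
  have hcolor : ∀ a, c.color (insert none (some '' I)) (Option.elim' a x) =
      c.color (insert none (some '' I)) (Option.elim' a y) :=
    fun a => c.dependsOn _ (by simpa using h)
  simp only [nearColors, exists_near_congr h, hcolor]

lemma dependsOn_coveredCells (B : K → ι → Set V) (I : Set ι) :
    DependsOn (c.coveredCells B I) I := fun x y h => by
  simp only [coveredCells, exists_near_congr h]

variable {κ : Type} {π : ι → κ} {x y : ι → V} {a b : V}

lemma exists_iff_of_near (hx : Separated G (4 * r) π x) (hy : Separated G (4 * r) π y)
    (hbase : ∀ j, c.baseColors (π ⁻¹' {j}) x = c.baseColors (π ⁻¹' {j}) y)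
    (hnear : ∀ j, c.nearColors (π ⁻¹' {j}) x = c.nearColors (π ⁻¹' {j}) y)
    (hb : ∃ i, Near G r (y i) b) : ∃ a, P (Option.elim' a x) ↔ P (Option.elim' b y) := by
  obtain ⟨i, hi⟩ := hb
  obtain ⟨a, ⟨i', hi' : π i' = π i, ha⟩, hcolor⟩ :
      c.color (insert none (some '' (π ⁻¹' {π i}))) (Option.elim' b y) ∈
        c.nearColors (π ⁻¹' {π i}) x := hnear (π i) ▸ ⟨b, ⟨i, rfl, hi⟩, rfl⟩
  -- The new vertex joins the part of `i`.
  have separated {z : ι → V} {e : V} {k : ι} (hz : Separated G (4 * r) π z) (hk : π k = π i)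
      (he : Near G r (z k) e) : Separated G r (Option.elim' (π i) π) (Option.elim' e z) := by
    rintro (_ | p) (_ | q) hpq hn
    · exact hpq rfl
    · exact hz k q (hk ▸ hpq) (he.trans hn (by omega))
    · exact hz p k (hk ▸ hpq) (Near.trans hn he.symm (by omega))
    · exact hz p q hpq (hn.mono (by omega))
  refine ⟨a, c.iff_of_color_eq _ (separated hx hi' ha) (separated hy rfl hi) fun j => ?_⟩
  obtain rfl | hj := eq_or_ne (π i) j
  · have hpart : Option.elim' (π i) π ⁻¹' {π i} = insert none (some '' (π ⁻¹' {π i})) := by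
      ext (_ | _) <;> simp
    rw [hpart, hcolor]
  · have hpart : Option.elim' (π i) π ⁻¹' {j} = some '' (π ⁻¹' {j}) := by
      ext (_ | _) <;> simp [hj]
    rw [hpart, c.color_some_image_eq_of_baseColors_eq (hbase j) a b]

lemma iff_of_far (hx : Separated G (4 * r) π x) (hy : Separated G (4 * r) π y)
    (hbase : ∀ j, c.baseColors (π ⁻¹' {j}) x = c.baseColors (π ⁻¹' {j}) y)
    (hab : c.vertexColor a = c.vertexColor b) (ha : ∀ i, ¬ Near G r (x i) a)
    (hb : ∀ i, ¬ Near G r (y i) b) : P (Option.elim' a x) ↔ P (Option.elim' b y) := by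
  -- The new vertex forms a part of its own.
  have separated {z : ι → V} {e : V} (hz : Separated G (4 * r) π z)
      (he : ∀ i, ¬ Near G r (z i) e) : Separated G r (Option.map π) (Option.elim' e z) := by
    rintro (_ | p) (_ | q) hpq hn
    · exact hpq rfl
    · exact he q hn.symm
    · exact he p hn
    · exact hz p q (by simpa using hpq) (hn.mono (by omega))
  refine c.iff_of_color_eq (Option.map π) (separated hx ha) (separated hy hb) ?_
  rintro (_ | j)
  · have hpart : Option.map π ⁻¹' {none} = {none} := by ext (_ | _) <;> simp
    rw [hpart, color_singleton_none, color_singleton_none, hab]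
  · have hpart : Option.map π ⁻¹' {some j} = some '' (π ⁻¹' {j}) := by ext (_ | _) <;> simp
    rw [hpart, c.color_some_image_eq_of_baseColors_eq (hbase j) a b]

lemma exists_far_of_coveredCells_eq {B : K → ι → Set V}
    (hBnear : ∀ k p, ∀ a ∈ B k p, ∀ b ∈ B k p, Near G (2 * r) a b)
    (hBcover : ∀ k, (∀ a ∈ c.vertexColor ⁻¹' {k}, ∃ p, a ∈ B k p) ∨
      ∀ x : ι → V, ∃ a ∈ c.vertexColor ⁻¹' {k}, ∀ i, ¬ Near G r (x i) a)
    (hx : Separated G (4 * r) π x)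
    (hcells : ∀ j, c.coveredCells B (π ⁻¹' {j}) x = c.coveredCells B (π ⁻¹' {j}) y)
    (hb : ∀ i, ¬ Near G r (y i) b) :
    ∃ a, c.vertexColor a = c.vertexColor b ∧ ∀ i, ¬ Near G r (x i) a := by
  obtain hcover | havoid := hBcover (c.vertexColor b)
  swap
  · exact havoid x
  by_contra! hcon
  obtain ⟨p, hbp⟩ := hcover b rfl
  obtain ⟨i₀, hi₀⟩ := hcon b rfl
  have huncovered : (c.vertexColor b, p) ∉ c.coveredCells B (π ⁻¹' {π i₀}) x := by
    rw [hcells]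
    intro h
    obtain ⟨i, -, hi⟩ := h b hbp rfl
    exact hb i hi
  simp only [coveredCells, Set.mem_ofPred_eq, not_forall, not_exists, not_and] at huncovered
  obtain ⟨a, hap, hab, ha⟩ := huncovered
  obtain ⟨i₁, hi₁⟩ := hcon a hab
  -- `a` and `b` share a cell, so the entries near them cannot lie in distinct parts.
  exact hx i₁ i₀ (fun h => ha i₁ h hi₁)
    ((hi₁.trans (hBnear _ p a hap b hbp) le_rfl).trans hi₀.symm (by omega))

lemma nonempty_forall (c : PartColoring G r P K) :
    Nonempty (PartColoring G (4 * r) (fun x => ∀ a, P (Option.elim' a x))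
      (Set K × Set K × Set (K × ι))) := by
  choose B hBnear hBcover using fun k =>
    exists_cells_cover_or_forall_exists_far (ι := ι) G r (c.vertexColor ⁻¹' {k})
  -- One round of a back-and-forth game between `x` and `y`.
  have extend {κ : Type} {π : ι → κ} {x y : ι → V} (hx : Separated G (4 * r) π x)
      (hy : Separated G (4 * r) π y)
      (hbase : ∀ j, c.baseColors (π ⁻¹' {j}) x = c.baseColors (π ⁻¹' {j}) y)
      (hnear : ∀ j, c.nearColors (π ⁻¹' {j}) x = c.nearColors (π ⁻¹' {j}) y)
      (hcells : ∀ j, c.coveredCells B (π ⁻¹' {j}) x = c.coveredCells B (π ⁻¹' {j}) y) (b : V) :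
      ∃ a, P (Option.elim' a x) ↔ P (Option.elim' b y) := by
    by_cases hb : ∃ i, Near G r (y i) b
    · exact c.exists_iff_of_near hx hy hbase hnear hb
    · push Not at hb
      obtain ⟨a, hab, ha⟩ := c.exists_far_of_coveredCells_eq hBnear hBcover hx hcells hb
      exact ⟨a, c.iff_of_far hx hy hbase hab ha hb⟩
  refine ⟨⟨fun I x => (c.baseColors I x, c.nearColors I x, c.coveredCells B I x),
    fun I x y h => ?_, fun π x y hx hy hxy => ?_⟩⟩
  · simp only [c.dependsOn_baseColors I h, c.dependsOn_nearColors I h,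
      c.dependsOn_coveredCells B I h]
  · simp only [Prod.mk.injEq, forall_and] at hxy
    obtain ⟨hbase, hnear, hcells⟩ := hxy
    constructor
    · intro h b
      obtain ⟨a, ha⟩ := extend hx hy hbase hnear hcells b
      exact ha.1 (h a)
    · intro h b
      obtain ⟨a, ha⟩ := extend hy hx (fun j => (hbase j).symm) (fun j => (hnear j).symm)
        (fun j => (hcells j).symm) b
      exact ha.1 (h a)

end PartColoring

lemma IsDecomposable.forall {ι : Type} [Finite ι]
    {P : ∀ {V : Type u}, SimpleGraph V → (Option ι → V) → Prop} (hP : IsDecomposable P) :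
    IsDecomposable (fun G x => ∀ a, P G (Option.elim' a x)) := by
  obtain ⟨r, K, _, hP⟩ := hP
  refine ⟨4 * r, Set K × Set K × Set (K × ι), inferInstance, fun V G => ?_⟩
  obtain ⟨c⟩ := hP V G
  exact c.nonempty_forall

lemma exists_eq_var {α : Type*} (t : Language.graph.Term α) : ∃ i, t = Language.Term.var i := by
  cases t with
  | var i => exact ⟨i, rfl⟩
  | func f _ => exact isEmptyElim f

lemma isDecomposable_realize {α : Type} [Finite α] {n : ℕ}
    (φ : Language.graph.BoundedFormula α n) :
    IsDecomposable.{u} (fun G (x : α ⊕ Fin n → _) =>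
      letI := G.structure
      φ.Realize (x ∘ Sum.inl) (x ∘ Sum.inr)) := by
  induction φ with
  | falsum => exact IsDecomposable.false
  | equal t₁ t₂ =>
    obtain ⟨i, rfl⟩ := exists_eq_var t₁
    obtain ⟨j, rfl⟩ := exists_eq_var t₂
    convert IsDecomposable.of_near_one (fun _ u v => u = v)
      (fun G u v h => h ▸ Near.refl G 1 u) i j using 4 with V G x
    change _ = _ ↔ _
    simp
  | rel R ts =>
    cases R
    obtain ⟨i, hi⟩ := exists_eq_var (ts 0)
    obtain ⟨j, hj⟩ := exists_eq_var (ts 1)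
    convert IsDecomposable.of_near_one (fun G u v => G.Adj u v)
      (fun G u v h => (SimpleGraph.edist_eq_one_iff_adj.2 h).le) i j using 4 with V G x
    change G.Adj _ _ ↔ _
    simp [hi, hj]
  | imp _ _ hf hg => exact hf.imp hg
  | @all n f hf =>
    let e : α ⊕ Fin (n + 1) → Option (α ⊕ Fin n) :=
      Sum.elim (some ∘ Sum.inl) (Fin.snoc (some ∘ Sum.inr) none)
    convert (hf.comp e).forall using 4 with V G x
    refine forall_congr' fun a => ?_
    have hsnoc : (Option.elim' a x ∘ e) ∘ Sum.inr = Fin.snoc (x ∘ Sum.inr) a := by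
      ext i
      cases i using Fin.lastCases <;> simp [e]
    rw [hsnoc]
    rfl

theorem exists_coloring_realize_iff_of_pairwise_far {α : Type} [Finite α]
    (φ : Language.graph.Formula α) :
    ∃ (r : ℕ) (K : Type), Finite K ∧ ∀ (V : Type u) (G : SimpleGraph V), ∃ c : V → K,
      letI := G.structure
      ∀ x y : α → V, (∀ i j, i ≠ j → ¬ Near G r (x i) (x j)) →
        (∀ i j, i ≠ j → ¬ Near G r (y i) (y j)) → (∀ i, c (x i) = c (y i)) →
        (φ.Realize x ↔ φ.Realize y) := by
  obtain ⟨r, K, _, h⟩ := (isDecomposable_realize φ).comp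
    (Sum.elim id Fin.elim0 : α ⊕ Fin 0 → α)
  refine ⟨r, α → K, inferInstance, fun V G => ?_⟩
  obtain ⟨c⟩ := h V G
  refine ⟨fun v i => c.color {i} fun _ => v, fun x y hx hy hxy => ?_⟩
  let := G.structure
  have hrealize (z : α → V) : φ.Realize z ↔ Language.BoundedFormula.Realize φ
      ((z ∘ Sum.elim id Fin.elim0) ∘ Sum.inl) ((z ∘ Sum.elim id Fin.elim0) ∘ Sum.inr) := by
    rw [Language.Formula.Realize, Subsingleton.elim ((z ∘ Sum.elim id Fin.elim0) ∘ Sum.inr) default]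
    rfl
  rw [hrealize, hrealize]
  refine c.iff_of_color_eq id hx hy fun i => ?_
  have hcolor (z : α → V) : c.color {i} z = c.color {i} fun _ => z i := c.dependsOn _ (by simp)
  rw [Set.preimage_id, hcolor x, hcolor y]
  exact congrFun (hxy i) i

end Locality

section VCDim

/-! ### Relations of bounded VC-dimension -/

open Finset

/-- The relation `R` has VC-dimension less than `n`: no `n`-tuple on the left-hand side is shattered
by the right-hand side. -/
def VCDimLT {A B : Type*} (R : A → B → Prop) (n : ℕ) : Prop :=
  ¬ ∃ (a : Fin n → A) (b : Finset (Fin n) → B), ∀ i I, R (a i) (b I) ↔ i ∈ I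

lemma exists_forall_ne_of_injective {V : Type*} {n : ℕ} (a : Fin n → V)
    {b : Finset (Fin n) → V} (hb : Function.Injective b) : ∃ J, ∀ i, a i ≠ b J := by
  by_contra! hcon
  choose g hg using hcon
  have hcard := Fintype.card_le_of_injective g fun J J' h => hb (by rw [← hg J, ← hg J', h])
  simp only [Fintype.card_finset, Fintype.card_fin] at hcard
  exact hcard.not_gt Nat.lt_two_pow_self

namespace VCDimLT

lemma not {A B : Type*} {R : A → B → Prop} {n : ℕ} (h : VCDimLT R n) :
    VCDimLT (fun a b => ¬ R a b) n := by
  rintro ⟨a, b, hab⟩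
  exact h ⟨a, fun I => b Iᶜ, fun i I => by simpa using not_congr (hab i Iᶜ)⟩

lemma comap {A B A' B' : Type*} {R : A → B → Prop} {n : ℕ} (h : VCDimLT R n) (f : A' → A)
    (g : B' → B) : VCDimLT (fun a b => R (f a) (g b)) n :=
  fun ⟨a, b, hab⟩ => h ⟨f ∘ a, g ∘ b, hab⟩

lemma ne_and {V : Type*} {R : V → V → Prop} {n : ℕ} (h : VCDimLT R n) :
    VCDimLT (fun u v => v ≠ u ∧ R u v) (n + n) := by
  classical
  rintro ⟨a, b, hab⟩
  -- Half of the indices are spent on obtaining `2 ^ n` distinct vertices realizing each trace.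
  let idx (I J : Finset (Fin n)) : Finset (Fin (n + n)) :=
    univ.filter (Fin.addCases (· ∈ I) (· ∈ J))
  have hleft (I J i) : b (idx I J) ≠ a (Fin.castAdd n i) ∧ R (a (Fin.castAdd n i)) (b (idx I J)) ↔
      i ∈ I := (hab _ _).trans (by simp [idx])
  have hright (I J j) : b (idx I J) ≠ a (Fin.natAdd n j) ∧ R (a (Fin.natAdd n j)) (b (idx I J)) ↔
      j ∈ J := (hab _ _).trans (by simp only [idx, mem_filter_univ, Fin.addCases_right])
  have hinj (I) : Function.Injective fun J => b (idx I J) := fun J J' hJ => by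
    ext j
    rw [← hright I J, ← hright I J', show b (idx I J) = b (idx I J') from hJ]
  choose J hJ using fun I => exists_forall_ne_of_injective (a ∘ Fin.castAdd n) (hinj I)
  exact h ⟨a ∘ Fin.castAdd n, fun I => b (idx I (J I)),
    fun i I => (and_iff_right (hJ I i).symm).symm.trans (hleft I (J I) i)⟩

end VCDimLT

section Traces

variable {V Y α : Type*} [Fintype α] {R : V → Y → Prop} {n : ℕ}

open scoped Classical in
/-- The traces left on the tuple `z` by the sets `{v | R v y}`. -/
noncomputable def traces (R : V → Y → Prop) (z : α → V) : Finset (Finset α) :=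
  {t | ∃ y, ∀ i, i ∈ t ↔ R (z i) y}

lemma mem_traces {z : α → V} {t : Finset α} : t ∈ traces R z ↔ ∃ y, ∀ i, i ∈ t ↔ R (z i) y := by
  simp [traces]

lemma VCDimLT.vcDim_traces_le [DecidableEq α] (hR : VCDimLT R n) (z : α → V) :
    (traces R z).vcDim ≤ n := by
  refine Finset.sup_le fun t ht => ?_
  by_contra! hcard
  obtain ⟨t', ht', hcard'⟩ := exists_subset_card_eq hcard.le
  have hshatters : (traces R z).Shatters t' := (mem_shatterer.1 ht).mono_right ht'
  let e : Fin n ≃ t' := (Fintype.equivFinOfCardEq (by simpa using hcard')).symm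
  have hrealize (I : Finset (Fin n)) : ∃ y, ∀ i, R (z (e i)) y ↔ i ∈ I := by
    let f : Fin n ↪ α := e.toEmbedding.trans (Function.Embedding.subtype _)
    obtain ⟨u, hu, hI⟩ := hshatters (t := I.map f) fun x hx => by
      obtain ⟨i, -, rfl⟩ := mem_map.1 hx
      exact (e i).2
    obtain ⟨y, hy⟩ := mem_traces.1 hu
    refine ⟨y, fun i => ?_⟩
    have hmem : (e i : α) ∈ t' ∩ u ↔ f i ∈ I.map f := by rw [hI]; rfl
    rwa [mem_inter, and_iff_right (e i).2, hy, mem_map'] at hmem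
  choose b hb using hrealize
  exact hR ⟨fun i => z (e i), b, fun i I => hb I i⟩

lemma VCDimLT.card_traces_le (hR : VCDimLT R n) (z : α → V) :
    #(traces R z) ≤ (n + 1) * (Fintype.card α + 1) ^ n := by
  classical
  calc #(traces R z) ≤ #(traces R z).shatterer := card_le_card_shatterer _
    _ ≤ ∑ k ∈ Iic (traces R z).vcDim, (Fintype.card α).choose k := card_shatterer_le_sum_vcDim
    _ ≤ ∑ k ∈ Iic n, (Fintype.card α).choose k :=
        sum_le_sum_of_subset (Iic_subset_Iic.2 (hR.vcDim_traces_le z))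
    _ ≤ ∑ k ∈ Iic n, (Fintype.card α + 1) ^ n := sum_le_sum fun k hk =>
        calc (Fintype.card α).choose k ≤ Fintype.card α ^ k := Nat.choose_le_pow _ _
          _ ≤ (Fintype.card α + 1) ^ k := Nat.pow_le_pow_left (Nat.le_succ _) _
          _ ≤ (Fintype.card α + 1) ^ n := Nat.pow_le_pow_right (Nat.succ_pos _) (mem_Iic.1 hk)
    _ = (n + 1) * (Fintype.card α + 1) ^ n := by simp

lemma card_traces_exists_le {β : Type*} [Fintype β] (R : V → Y → Prop) (z : α → β → V) :
    #(traces (fun (x : β → V) y => ∃ l, R (x l) y) z) ≤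
      #(traces R fun p : α × β => z p.1 p.2) := by
  classical
  refine card_le_card_of_surjOn
    (fun s : Finset (α × β) => ({i | ∃ l, (i, l) ∈ s} : Finset α)) fun t ht => ?_
  obtain ⟨y, hy⟩ := mem_traces.1 ht
  refine ⟨({p | R (z p.1 p.2) y} : Finset (α × β)), mem_coe.2 (mem_traces.2 ⟨y, by simp⟩), ?_⟩
  ext i
  simp [hy]

end Traces

section Mass

variable {Ω Ω' : Type*} [Fintype Ω] [Fintype Ω'] {w : Ω → ℝ} {w' : Ω' → ℝ}

open Classical in
/-- The total weight of the set `s` under `w`. -/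
noncomputable def mass (w : Ω → ℝ) (s : Set Ω) : ℝ := ∑ x with x ∈ s, w x

lemma mass_nonneg (hw : w ∈ stdSimplex ℝ Ω) (s : Set Ω) : 0 ≤ mass w s :=
  sum_nonneg fun x _ => hw.1 x

lemma mass_mono (hw : w ∈ stdSimplex ℝ Ω) {s t : Set Ω} (hst : s ⊆ t) : mass w s ≤ mass w t := by
  classical
  exact sum_le_sum_of_subset_of_nonneg (monotone_filter_right _ fun _ _ hx => hst hx)
    fun x _ _ => hw.1 x

lemma mass_compl (hw : w ∈ stdSimplex ℝ Ω) (s : Set Ω) : mass w sᶜ = 1 - mass w s := by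
  classical
  rw [← hw.2, eq_sub_iff_add_eq', mass, mass, ← sum_filter_add_sum_filter_not univ (· ∈ s) w]
  simp only [Set.mem_compl_iff]

lemma prod_mem_stdSimplex (hw : w ∈ stdSimplex ℝ Ω) (k : ℕ) :
    (fun z : Fin k → Ω => ∏ i, w (z i)) ∈ stdSimplex ℝ (Fin k → Ω) :=
  ⟨fun z => prod_nonneg fun i _ => hw.1 (z i), by rw [← Fintype.sum_pow, hw.2, one_pow]⟩

lemma mass_prod_forall (w : Ω → ℝ) (s : Set Ω) (k : ℕ) :
    mass (fun z : Fin k → Ω => ∏ i, w (z i)) {z | ∀ i, z i ∈ s} = mass w s ^ k := by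
  rw [mass, mass, sum_pow']
  exact sum_congr (by ext; simp) fun _ _ => rfl

lemma mul_mem_stdSimplex (hw : w ∈ stdSimplex ℝ Ω) (hw' : w' ∈ stdSimplex ℝ Ω') :
    (fun q : Ω × Ω' => w q.1 * w' q.2) ∈ stdSimplex ℝ (Ω × Ω') :=
  ⟨fun q => mul_nonneg (hw.1 _) (hw'.1 _), by
    rw [Fintype.sum_prod_type, ← Fintype.sum_mul_sum, hw.2, hw'.2, one_mul]⟩

lemma le_mass_mul_of_forall_le (hw : w ∈ stdSimplex ℝ Ω) {s : Set (Ω × Ω')} {c : ℝ}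
    (h : ∀ x, c ≤ mass w' {z | (x, z) ∈ s}) : c ≤ mass (fun q : Ω × Ω' => w q.1 * w' q.2) s :=
  calc c = ∑ x, w x * c := by rw [← sum_mul, hw.2, one_mul]
    _ ≤ ∑ x, w x * mass w' {z | (x, z) ∈ s} :=
        sum_le_sum fun x _ => mul_le_mul_of_nonneg_left (h x) (hw.1 x)
    _ = mass (fun q : Ω × Ω' => w q.1 * w' q.2) s := by
        simp [mass, mul_sum, sum_filter, Fintype.sum_prod_type]

open Classical in
lemma card_mul_mass {J : Type*} [Fintype J] (τ : J → Equiv.Perm Ω)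
    (hτ : ∀ j x, w (τ j x) = w x) (s : Set Ω) :
    Fintype.card J * mass w s = ∑ x, w x * #{j | τ j x ∈ s} :=
  calc (Fintype.card J : ℝ) * mass w s = ∑ j : J, ∑ x, if x ∈ s then w x else 0 := by
        simp [mass, sum_filter]
    _ = ∑ j : J, ∑ x, if τ j x ∈ s then w x else 0 :=
        sum_congr rfl fun j _ => by rw [← Equiv.sum_comp (τ j)]; simp only [hτ]
    _ = ∑ x, w x * #{j | τ j x ∈ s} := by
        rw [sum_comm]
        exact sum_congr rfl fun x _ => by rw [← sum_filter, sum_const, nsmul_eq_mul, mul_comm]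

open Classical in
lemma mass_lt_half_of_perm (hw : w ∈ stdSimplex ℝ Ω) {J : Type*} [Fintype J]
    (τ : J → Equiv.Perm Ω) (hτ : ∀ j x, w (τ j x) = w x) {s : Set Ω}
    (hs : ∀ x, 2 * #{j | τ j x ∈ s} < Fintype.card J) : mass w s < 1 / 2 := by
  have hle : Fintype.card J * mass w s ≤ (Fintype.card J - 1) / 2 :=
    calc Fintype.card J * mass w s = ∑ x, w x * #{j | τ j x ∈ s} := card_mul_mass τ hτ s
      _ ≤ ∑ x, w x * ((Fintype.card J - 1) / 2) := by
          refine sum_le_sum fun x _ => mul_le_mul_of_nonneg_left ?_ (hw.1 x)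
          have hx : (2 * #{j | τ j x ∈ s} + 1 : ℝ) ≤ Fintype.card J := by exact_mod_cast hs x
          linarith
      _ = (Fintype.card J - 1) / 2 := by rw [← sum_mul, hw.2, one_mul]
  by_contra! hhalf
  linarith [mul_le_mul_of_nonneg_left hhalf (Nat.cast_nonneg (α := ℝ) (Fintype.card J))]

end Mass

section Net

open Classical in
/-- The permutation of pairs of tuples that exchanges the entries outside `t`. -/
noncomputable def exchange {ι Ω : Type*} (t : Finset ι) : Equiv.Perm ((ι → Ω) × (ι → Ω)) :=
  Function.Involutive.toPerm (fun q => (t.piecewise q.1 q.2, t.piecewise q.2 q.1)) fun q => by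
    ext i <;> by_cases hi : i ∈ t <;> simp [hi]

lemma exchange_apply_of_mem {ι Ω : Type*} {t : Finset ι} {i : ι} (hi : i ∈ t)
    (q : (ι → Ω) × (ι → Ω)) : (exchange t q).1 i = q.1 i ∧ (exchange t q).2 i = q.2 i := by
  classical
  exact ⟨piecewise_eq_of_mem _ _ _ hi, piecewise_eq_of_mem _ _ _ hi⟩

lemma exchange_apply_of_notMem {ι Ω : Type*} {t : Finset ι} {i : ι} (hi : i ∉ t)
    (q : (ι → Ω) × (ι → Ω)) : (exchange t q).1 i = q.2 i ∧ (exchange t q).2 i = q.1 i := by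
  classical
  exact ⟨piecewise_eq_of_notMem _ _ _ hi, piecewise_eq_of_notMem _ _ _ hi⟩

lemma prod_exchange_mul_prod_exchange {ι Ω : Type*} [Fintype ι] (w : Ω → ℝ) (t : Finset ι)
    (q : (ι → Ω) × (ι → Ω)) :
    (∏ i, w ((exchange t q).1 i)) * ∏ i, w ((exchange t q).2 i) =
      (∏ i, w (q.1 i)) * ∏ i, w (q.2 i) := by
  rw [← prod_mul_distrib, ← prod_mul_distrib]
  refine prod_congr rfl fun i _ => ?_
  by_cases hi : i ∈ t
  · rw [(exchange_apply_of_mem hi q).1, (exchange_apply_of_mem hi q).2]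
  · rw [(exchange_apply_of_notMem hi q).1, (exchange_apply_of_notMem hi q).2, mul_comm]

/-- Double sampling: otherwise, with probability at least `1 / 2`, a sample misses some `H · y` in
all entries while a second one hits it in all entries. After exchanging the entries outside a random
set `t`, this can only happen if `t` is a trace on the second sample. -/
lemma exists_forall_exists_hit {Y Ω : Type*} [Fintype Ω] {k : ℕ} {w : Ω → ℝ}
    (hw : w ∈ stdSimplex ℝ Ω) {H : Ω → Y → Prop} (hH : ∀ y, 1 / 2 ≤ mass w {x | H x y} ^ k)
    (hcard : ∀ z : Fin k → Ω, 2 * #(traces H z) < 2 ^ k) :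
    ∃ x : Fin k → Ω, ∀ y, ∃ i, H (x i) y := by
  classical
  by_contra! hcon
  choose f hf using hcon
  let W (q : (Fin k → Ω) × (Fin k → Ω)) : ℝ := (∏ i, w (q.1 i)) * ∏ i, w (q.2 i)
  have hW : W ∈ stdSimplex ℝ _ := mul_mem_stdSimplex (prod_mem_stdSimplex hw k)
    (prod_mem_stdSimplex hw k)
  let bad : Set ((Fin k → Ω) × (Fin k → Ω)) := {q | ∃ y, ∀ i, ¬ H (q.1 i) y ∧ H (q.2 i) y}
  have hlow : 1 / 2 ≤ mass W bad :=
    calc 1 / 2 ≤ mass W {q | ∀ i, H (q.2 i) (f q.1)} :=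
          le_mass_mul_of_forall_le (w' := fun z : Fin k → Ω => ∏ i, w (z i))
            (s := {q : (Fin k → Ω) × (Fin k → Ω) | ∀ i, H (q.2 i) (f q.1)})
            (prod_mem_stdSimplex hw k) fun x =>
            (hH (f x)).trans_eq (mass_prod_forall w {a | H a (f x)} k).symm
      _ ≤ mass W bad := mass_mono hW fun q hq => ⟨f q.1, fun i => ⟨hf q.1 i, hq i⟩⟩
  have hbad (q) : ({t | exchange t q ∈ bad} : Finset (Finset (Fin k))) ⊆ traces H q.2 := by
    intro t ht
    obtain ⟨y, hy⟩ := (mem_filter_univ t).1 ht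
    refine mem_traces.2 ⟨y, fun i => ?_⟩
    by_cases hi : i ∈ t
    · exact iff_of_true hi ((exchange_apply_of_mem hi q).2 ▸ (hy i).2)
    · exact iff_of_false hi ((exchange_apply_of_notMem hi q).1 ▸ (hy i).1)
  refine hlow.not_gt (mass_lt_half_of_perm hW exchange (prod_exchange_mul_prod_exchange w)
    fun q => ?_)
  rw [Fintype.card_finset, Fintype.card_fin]
  exact (Nat.mul_le_mul_left 2 (card_le_card (hbad q))).trans_lt (hcard q.2)

lemma exists_mul_pow_lt_two_pow (n : ℕ) : ∃ k : ℕ, 2 * ((n + 1) * (k * k + 1) ^ n) < 2 ^ k := by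
  obtain ⟨k, hk, hk0⟩ := ((tendsto_pow_const_div_const_pow_of_one_lt (2 * n)
    (one_lt_two (α := ℝ))).eventually (gt_mem_nhds
      (show (0 : ℝ) < 1 / (2 * (n + 1) * 2 ^ n) by positivity))).and
    (Filter.eventually_gt_atTop 0) |>.exists
  rw [div_lt_div_iff₀ (by positivity) (by positivity), one_mul] at hk
  refine ⟨k, ?_⟩
  calc 2 * ((n + 1) * (k * k + 1) ^ n) ≤ 2 * ((n + 1) * (2 * k ^ 2) ^ n) := by
        gcongr
        nlinarith
    _ = k ^ (2 * n) * (2 * (n + 1) * 2 ^ n) := by rw [mul_pow, ← pow_mul]; ring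
    _ < 2 ^ k := by exact_mod_cast hk

lemma half_le_one_sub_half_pow_pow (k : ℕ) : (1 : ℝ) / 2 ≤ (1 - (1 / 2) ^ k) ^ k := by
  cases k with
  | zero => norm_num
  | succ k =>
    have hpow : (k + 1 : ℝ) * (1 / 2) ^ k ≤ 1 := by
      rw [one_div_pow, mul_one_div, div_le_one (by positivity)]
      exact_mod_cast Nat.lt_two_pow_self
    have hle : (1 / 2 : ℝ) ^ (k + 1) ≤ 1 := pow_le_one₀ (by norm_num) (by norm_num)
    calc (1 : ℝ) / 2 ≤ 1 + ((k + 1 : ℕ) : ℝ) * -(1 / 2) ^ (k + 1) := by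
          rw [pow_succ]
          push_cast
          linarith
      _ ≤ (1 + -(1 / 2) ^ (k + 1)) ^ (k + 1) := one_add_mul_le_pow (by linarith) _
      _ = (1 - (1 / 2) ^ (k + 1)) ^ (k + 1) := by rw [sub_eq_add_neg]

lemma one_sub_half_pow_le_mass_exists {V : Type*} [Fintype V] {w : V → ℝ}
    (hw : w ∈ stdSimplex ℝ V) {s : Set V} (hs : 1 / 2 ≤ mass w s) (k : ℕ) :
    1 - (1 / 2) ^ k ≤ mass (fun x : Fin k → V => ∏ i, w (x i)) {x | ∃ l, x l ∈ s} := by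
  have hmiss : {x : Fin k → V | ∃ l, x l ∈ s} = {x | ∀ l, x l ∈ sᶜ}ᶜ := by ext; simp
  rw [hmiss, mass_compl (prod_mem_stdSimplex hw k), mass_prod_forall, mass_compl hw]
  gcongr
  · rw [← mass_compl hw]
    exact mass_nonneg hw _
  · linarith

/-- The `ε`-net theorem for `ε = 1 / 2`. -/
theorem exists_halfNet_card_le (n : ℕ) : ∃ s : ℕ, ∀ {V Y : Type u} [Fintype V] {R : V → Y → Prop},
    VCDimLT R n → ∀ w ∈ stdSimplex ℝ V, (∀ y, 1 / 2 ≤ mass w {v | R v y}) →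
      ∃ T : Finset V, #T ≤ s ∧ ∀ y, ∃ v ∈ T, R v y := by
  classical
  obtain ⟨k, hk⟩ := exists_mul_pow_lt_two_pow n
  refine ⟨k * k, fun {V Y} _ R hR w hw hnet => ?_⟩
  -- Sample `k` blocks of `k` vertices each, so that each block hits each set almost surely.
  obtain ⟨x, hx⟩ := exists_forall_exists_hit (k := k) (H := fun x y => ∃ l, R (x l) y)
    (prod_mem_stdSimplex hw k)
    (fun y => (half_le_one_sub_half_pow_pow k).trans <| pow_le_pow_left₀
      (sub_nonneg.2 (pow_le_one₀ (by norm_num) (by norm_num)))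
      (one_sub_half_pow_le_mass_exists hw (hnet y) k) k)
    fun z => by
      have hcard := (card_traces_exists_le R z).trans (hR.card_traces_le _)
      rw [Fintype.card_prod, Fintype.card_fin] at hcard
      exact (Nat.mul_le_mul_left 2 hcard).trans_lt hk
  refine ⟨univ.image fun p : Fin k × Fin k => x p.1 p.2, card_image_le.trans_eq (by simp),
    fun y => ?_⟩
  obtain ⟨i, l, hl⟩ := hx y
  exact ⟨x i l, mem_image_of_mem (fun p : Fin k × Fin k => x p.1 p.2) (mem_univ (i, l)), hl⟩

end Net

section Minimax

variable {A B : Type*} [Fintype A] [Fintype B] [Nonempty A] [Nonempty B]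

open Matrix

/-- Von Neumann's minimax theorem for matrix games. -/
theorem exists_vecMul_le_mulVec (M : Matrix A B ℝ) :
    ∃ x ∈ stdSimplex ℝ A, ∃ y ∈ stdSimplex ℝ B, ∀ i j, (x ᵥ* M) j ≤ (M *ᵥ y) i := by
  classical
  let payoff : (A → ℝ) →ₗ[ℝ] (B → ℝ) →ₗ[ℝ] ℝ := Matrix.toLinearMap₂' ℝ M
  have continuous_left (y) : Continuous (payoff · y) :=
    LinearMap.continuous_of_finiteDimensional (payoff.flip y)
  have continuous_right (x) : Continuous (payoff x) :=
    LinearMap.continuous_of_finiteDimensional (payoff x)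
  obtain ⟨x, hx, y, hy, hxy⟩ := Sion.exists_isSaddlePointOn (X := stdSimplex ℝ A)
    (Y := stdSimplex ℝ B) (f := fun x y => payoff x y)
    ⟨_, single_mem_stdSimplex ℝ (Classical.arbitrary A)⟩
    (convex_stdSimplex ℝ A) (isCompact_stdSimplex ℝ A)
    (fun y _ => (continuous_left y).lowerSemicontinuous.lowerSemicontinuousOn _)
    (fun y _ => ((payoff.flip y).convexOn (convex_stdSimplex ℝ A)).quasiconvexOn)
    (convex_stdSimplex ℝ B) ⟨_, single_mem_stdSimplex ℝ (Classical.arbitrary B)⟩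
    (isCompact_stdSimplex ℝ B)
    (fun x _ => (continuous_right x).upperSemicontinuous.upperSemicontinuousOn _)
    (fun x _ => ((payoff x).concaveOn (convex_stdSimplex ℝ B)).quasiconcaveOn)
  refine ⟨x, hx, y, hy, fun i j => ?_⟩
  have := hxy _ (single_mem_stdSimplex ℝ i) _ (single_mem_stdSimplex ℝ j)
  change x ⬝ᵥ M.col j ≤ M.row i ⬝ᵥ y
  simpa [payoff, Matrix.toLinearMap₂'_apply', dotProduct_mulVec] using this

/-- The minimax theorem for the game in which the maximizing player wins iff `E a b`, according to
whether its value is at least `1 / 2`. -/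
lemma exists_half_le_mass_not_or (E : A → B → Prop) :
    (∃ w ∈ stdSimplex ℝ B, ∀ a, 1 / 2 ≤ mass w {b | ¬ E a b}) ∨
      ∃ w ∈ stdSimplex ℝ A, ∀ b, 1 / 2 ≤ mass w {a | E a b} := by
  classical
  obtain ⟨x, hx, y, hy, hxy⟩ := exists_vecMul_le_mulVec
    (Matrix.of fun (b : B) (a : A) => if E a b then (1 : ℝ) else 0)
  have hmass (a b) : mass x {b | E a b} ≤ mass y {a | E a b} := by
    simpa [mass, vecMul, mulVec, dotProduct, sum_filter] using hxy b a
  by_cases hhalf : ∀ a, mass x {b | E a b} ≤ 1 / 2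
  · refine Or.inl ⟨x, hx, fun a => ?_⟩
    change 1 / 2 ≤ mass x {b | E a b}ᶜ
    rw [mass_compl hx]
    linarith [hhalf a]
  · push Not at hhalf
    obtain ⟨a, ha⟩ := hhalf
    exact Or.inr ⟨y, hy, fun b => ha.le.trans (hmass a b)⟩

end Minimax

lemma exists_card_le_forall_exists_not_or (n : ℕ) : ∃ s : ℕ, ∀ {A B : Type u} [Finite A]
    [Finite B] {E : A → B → Prop}, VCDimLT E n → VCDimLT (fun b a => E a b) n →
      (∃ T : Finset B, #T ≤ s ∧ ∀ a, ∃ b ∈ T, ¬ E a b) ∨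
        ∃ T : Finset A, #T ≤ s ∧ ∀ b, ∃ a ∈ T, E a b := by
  obtain ⟨s, hs⟩ := exists_halfNet_card_le n
  refine ⟨s, fun {A B} _ _ E hE hE' => ?_⟩
  have := Fintype.ofFinite A
  have := Fintype.ofFinite B
  cases isEmpty_or_nonempty A
  · exact Or.inl ⟨∅, by simp, isEmptyElim⟩
  cases isEmpty_or_nonempty B
  · exact Or.inr ⟨∅, by simp, isEmptyElim⟩
  exact (exists_half_le_mass_not_or E).imp (fun ⟨w, hw, h⟩ => hs hE'.not w hw h)
    fun ⟨w, hw, h⟩ => hs hE w hw h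

end VCDim

section Guard

/-! ### Guarding sets -/

open Finset

/-- Some set of at most `n` elements of `U` satisfies `P`. -/
def HasWitness {V : Type*} (U : Set V) (n : ℕ) (P : Finset V → Prop) : Prop :=
  ∃ S : Finset V, (S : Set V) ⊆ U ∧ #S ≤ n ∧ P S

namespace HasWitness

variable {V : Type*} {U U' : Set V} {m n : ℕ} {P Q : Finset V → Prop}

lemma imp (h : HasWitness U m P) (hU : U ⊆ U') (hmn : m ≤ n)
    (hPQ : ∀ S, P S → Q S) : HasWitness U' n Q := by
  obtain ⟨S, hSU, hSm, hS⟩ := h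
  exact ⟨S, hSU.trans hU, hSm.trans hmn, hPQ S hS⟩

lemma and (hP : HasWitness U m P) (hQ : HasWitness U n Q) (hPmono : Monotone P)
    (hQmono : Monotone Q) : HasWitness U (m + n) fun S => P S ∧ Q S := by
  classical
  obtain ⟨S, hSU, hSm, hS⟩ := hP
  obtain ⟨T, hTU, hTn, hT⟩ := hQ
  exact ⟨S ∪ T, by simp [hSU, hTU], (card_union_le S T).trans (add_le_add hSm hTn),
    hPmono subset_union_left hS, hQmono subset_union_right hT⟩

lemma all {J : Type*} [Finite J] {P : J → Finset V → Prop} (hP : ∀ j, HasWitness U n (P j))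
    (hPmono : ∀ j, Monotone (P j)) : HasWitness U (Nat.card J * n) fun S => ∀ j, P j S := by
  classical
  have := Fintype.ofFinite J
  choose S hSU hSn hS using hP
  refine ⟨univ.biUnion S, by simpa using hSU, ?_,
    fun j => hPmono j (subset_biUnion_of_mem S (mem_univ j)) (hS j)⟩
  rw [Nat.card_eq_fintype_card]
  exact card_biUnion_le_card_mul _ _ _ fun j _ => hSn j

end HasWitness

/-- Either every vertex of `A` has a non-neighbour in `B ∩ S` or every vertex of `B` has a neighbour
in `A ∩ S`. -/
def Dichotomy {V : Type*} (S : Finset V) (E : V → V → Prop) (A B : Set V) : Prop :=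
  (∀ a ∈ A, ∃ b ∈ S, b ∈ B ∧ ¬ E a b) ∨ ∀ b ∈ B, ∃ a ∈ S, a ∈ A ∧ E a b

lemma monotone_dichotomy {V : Type*} (E : V → V → Prop) (A B : Set V) :
    Monotone (Dichotomy · E A B) := fun _ _ hST h =>
  h.imp (fun h a ha => (h a ha).imp fun _ hb => ⟨hST hb.1, hb.2⟩)
    fun h b hb => (h b hb).imp fun _ ha => ⟨hST ha.1, ha.2⟩

lemma exists_hasWitness_dichotomy (n : ℕ) : ∃ s : ℕ, ∀ {V : Type u} [Finite V] {E : V → V → Prop},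
    VCDimLT E n → VCDimLT (fun v u => E u v) n → ∀ A B : Set V,
      HasWitness (A ∪ B) s (Dichotomy · E A B) := by
  obtain ⟨s, hs⟩ := exists_card_le_forall_exists_not_or n
  refine ⟨s, fun {V} _ E hE hE' A B => ?_⟩
  obtain ⟨T, hT, h⟩ | ⟨T, hT, h⟩ :=
    hs (E := fun (a : A) (b : B) => E a b) (hE.comap _ _) (hE'.comap _ _)
  · refine ⟨T.map (.subtype _), by simp +contextual [Set.subset_def], by simpa, Or.inl ?_⟩
    intro a ha
    obtain ⟨b, hbT, hb⟩ := h ⟨a, ha⟩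
    exact ⟨b, mem_map_of_mem _ hbT, b.2, hb⟩
  · refine ⟨T.map (.subtype _), by simp +contextual [Set.subset_def], by simpa, Or.inr ?_⟩
    intro b hb
    obtain ⟨a, haT, ha⟩ := h ⟨b, hb⟩
    exact ⟨a, mem_map_of_mem _ haT, a.2, ha⟩

lemma hasWitness_forall_exists_far {V : Type*} {G : SimpleGraph V} {r : ℕ} {C : Set V}
    (hC : ∀ x : Fin 2 → V, ∃ a ∈ C, ∀ i, ¬ Near G (2 * r) (x i) a) :
    HasWitness C 3 fun S => ∀ u u', ∃ w ∈ S, ¬ Near G r u w ∧ ¬ Near G r u' w := by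
  classical
  cases isEmpty_or_nonempty V
  · exact ⟨∅, by simp, by simp, isEmptyElim⟩
  obtain ⟨a, haC, -⟩ := hC (Classical.arbitrary _)
  obtain ⟨b, hbC, hb⟩ := hC ![a, a]
  obtain ⟨c, hcC, hc⟩ := hC ![a, b]
  refine ⟨{a, b, c}, by simp [Set.insert_subset_iff, haC, hbC, hcC], card_le_three, ?_⟩
  -- Each of `u` and `u'` is near at most one of the points `a`, `b` and `c`.
  have near_unique {x y : V} (hxy : ¬ Near G (2 * r) x y) (u) (hx : Near G r u x) :
      ¬ Near G r u y := fun hy => hxy (hx.symm.trans hy (by omega))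
  have hab := near_unique (hb 0)
  have hac := near_unique (hc 0)
  have hbc := near_unique (hc 1)
  intro u u'
  simp only [mem_insert, mem_singleton, exists_eq_or_imp, exists_eq_left]
  have := hab u; have := hab u'; have := hac u; have := hac u'; have := hbc u; have := hbc u'
  tauto

variable {V K : Type*} {G : SimpleGraph V} {r ρ : ℕ} {c : V → K} {E : V → V → Prop}
  {S : Finset V} {u v u' v' : V}

/-- For pairs of vertices at distance greater than `r`, the relation `E` is determined by their
colours. -/
def FarDetermined (G : SimpleGraph V) (r : ℕ) (c : V → K) (E : V → V → Prop) : Prop :=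
  ∀ ⦃u v u' v'⦄, ¬ Near G r u v → ¬ Near G r u' v' → c u = c u' → c v = c v' → (E u v ↔ E u' v')

/-- `S` witnesses the dichotomies between some set of vertices near `u` having the colour of `u` and
some set of vertices near `v` having the colour of `v`. -/
def Linked (G : SimpleGraph V) (ρ : ℕ) (c : V → K) (E : V → V → Prop) (u v : V) (S : Finset V) :
    Prop :=
  ∃ A B : Set V, (u ∈ A ∧ ∀ a ∈ A, c a = c u ∧ Near G ρ a u) ∧
    (v ∈ B ∧ ∀ b ∈ B, c b = c v ∧ Near G ρ b v) ∧ Dichotomy S E A B ∧ Dichotomy S E B A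

lemma monotone_linked (u v : V) : Monotone (Linked G ρ c E u v) :=
  fun _ _ hST ⟨A, B, hA, hB, hAB, hBA⟩ =>
    ⟨A, B, hA, hB, monotone_dichotomy E A B hST hAB, monotone_dichotomy E B A hST hBA⟩

lemma Linked.symm (h : Linked G ρ c E u v S) : Linked G ρ c E v u S :=
  let ⟨A, B, hA, hB, hAB, hBA⟩ := h
  ⟨B, A, hB, hA, hBA, hAB⟩

/-- `S` makes it possible to replace `u` by `u'` in an adjacency to `v`, either because the colour
of `v` occurs in `S` far from both `u` and `u'`, or because `u'` and `v` are linked. -/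
def Exchangeable (G : SimpleGraph V) (r ρ : ℕ) (c : V → K) (E : V → V → Prop) (u u' v : V)
    (S : Finset V) : Prop :=
  (∃ w ∈ S, c w = c v ∧ ¬ Near G r u w ∧ ¬ Near G r u' w) ∨ Linked G ρ c E u' v S

lemma monotone_exchangeable (u u' v : V) : Monotone (Exchangeable G r ρ c E u u' v) :=
  fun _ _ hST h => h.imp (fun ⟨w, hw, h⟩ => ⟨w, hST hw, h⟩) (monotone_linked u' v hST ·)

lemma Linked.adj (h : Linked G ρ c E u' v S) (hE : FarDetermined G r c E)
    (hsymm : ∀ u v, E u v ↔ E v u) (huv : ¬ Near G (ρ + r) u v) (huv' : ¬ Near G (ρ + r) u' v')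
    (hu : ∀ w ∈ S, E u w ↔ E u' w) (hv : ∀ w ∈ S, E v w ↔ E v' w) (hadj : E u v) : E u' v' := by
  obtain ⟨A, B, ⟨hu'A, hA⟩, ⟨hvB, hB⟩, hAB | hAB, -⟩ := h
  · obtain ⟨b, hbS, hbB, hb⟩ := hAB u' hu'A
    obtain ⟨hbc, hbv⟩ := hB b hbB
    have hub : E u b := (hE (fun h => huv (h.mono (by omega)))
      (fun h => huv (h.trans hbv (by omega))) rfl hbc.symm).1 hadj
    exact absurd ((hu b hbS).1 hub) hb
  · obtain ⟨a, haS, haA, ha⟩ := hAB v hvB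
    obtain ⟨hac, hau'⟩ := hA a haA
    have hav' : E a v' := (hsymm _ _).1 ((hv a haS).1 ((hsymm _ _).1 ha))
    exact (hE (fun h => huv' (hau'.symm.trans h le_rfl)) (fun h => huv' (h.mono (by omega)))
      hac rfl).1 hav'

lemma adj_of_exchangeable (hE : FarDetermined G r c E) (hsymm : ∀ u v, E u v ↔ E v u)
    (huv : ¬ Near G (ρ + r) u v) (huv' : ¬ Near G (ρ + r) u' v')
    (hexch : Exchangeable G r ρ c E u u' v S) (hexch' : Exchangeable G r ρ c E v' v u' S)
    (hu : ∀ w ∈ S, E u w ↔ E u' w) (hv : ∀ w ∈ S, E v w ↔ E v' w) (hadj : E u v) : E u' v' := by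
  obtain ⟨w, hwS, hwc, huw, hu'w⟩ | hlink := hexch
  · obtain ⟨w', hwS', hwc', hv'w', hvw'⟩ | hlink := hexch'
    · have hu'w_adj : E u' w := (hu w hwS).1 <|
        (hE (fun h => huv (h.mono (by omega))) huw rfl hwc.symm).1 hadj
      have hvw'_adj : E v w' := (hsymm _ _).1 <|
        (hE hu'w (fun h => hvw' h.symm) hwc'.symm hwc).1 hu'w_adj
      have hv'u' : E v' u' := (hE hv'w' (fun h => huv' (h.symm.mono (by omega))) rfl hwc').1 <|
        (hv w' hwS').1 hvw'_adj
      exact (hsymm _ _).1 hv'u'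
    · exact hlink.symm.adj hE hsymm huv huv' hu hv hadj
  · exact hlink.adj hE hsymm huv huv' hu hv hadj

lemma hasWitness_exchangeable_of_cell [Finite K] {s : ℕ} {U Q : Set V}
    (hs : ∀ A ⊆ U, ∀ B ⊆ U, HasWitness U s (Dichotomy · E A B)) (hQU : Q ⊆ U)
    (hQ : ∀ a ∈ Q, ∀ b ∈ Q, c a = c b ∧ Near G (4 * r) a b) :
    HasWitness U (1 + Nat.card K * (s + s)) fun S =>
      ∀ v ∈ Q, ∀ u, ∀ u' ∈ U, ¬ Near G (5 * r) u v → Exchangeable G r (4 * r) c E u u' v S := by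
  obtain rfl | ⟨w, hwQ⟩ := Q.eq_empty_or_nonempty
  · exact ⟨∅, by simp, by simp, by simp⟩
  let A (k : K) : Set V := {a ∈ U | c a = k ∧ Near G r a w}
  have hAU (k) : A k ⊆ U := fun _ ha => ha.1
  have hmono (k) : Monotone fun S => Dichotomy S E (A k) Q ∧ Dichotomy S E Q (A k) :=
    fun _ _ hST => And.imp (monotone_dichotomy _ _ _ hST) (monotone_dichotomy _ _ _ hST)
  have hdich : HasWitness U (Nat.card K * (s + s))
      fun S => ∀ k, Dichotomy S E (A k) Q ∧ Dichotomy S E Q (A k) :=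
    .all (fun k => (hs _ (hAU k) _ hQU).and (hs _ hQU _ (hAU k)) (monotone_dichotomy _ _ _)
      (monotone_dichotomy _ _ _)) hmono
  have hmem : HasWitness U 1 (w ∈ ·) := ⟨{w}, by simpa using hQU hwQ, by simp, by simp⟩
  refine (hmem.and hdich (fun _ _ hST h => hST h) fun _ _ hST h k => hmono k hST (h k)).imp le_rfl
    le_rfl fun S ⟨hwS, hS⟩ v hv u u' hu' huv => ?_
  have hwv := hQ w hwQ v hv
  by_cases hu'w : Near G r u' w
  · exact Or.inr ⟨A (c u'), Q,
      ⟨⟨hu', rfl, hu'w⟩, fun a ha => ⟨ha.2.1, ha.2.2.trans hu'w.symm (by omega)⟩⟩,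
      ⟨hv, fun b hb => hQ b hb v hv⟩, hS (c u')⟩
  · exact Or.inl ⟨w, hwS, hwv.1, fun h => huv (h.trans hwv.2 (by omega)), hu'w⟩

lemma hasWitness_exchangeable_of_color [Finite K] {s : ℕ} {U : Set V}
    (hs : ∀ A ⊆ U, ∀ B ⊆ U, HasWitness U s (Dichotomy · E A B)) (k : K) :
    HasWitness U (3 + 2 * (1 + Nat.card K * (s + s))) fun S =>
      ∀ v ∈ U, c v = k → ∀ u, ∀ u' ∈ U, ¬ Near G (5 * r) u v →
        Exchangeable G r (4 * r) c E u u' v S := by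
  obtain ⟨B, hB, hcover | hfar⟩ :=
    exists_cells_cover_or_forall_exists_far (ι := Fin 2) G (2 * r) {a ∈ U | c a = k}
  · have hcell (p) := hasWitness_exchangeable_of_cell (r := r) (Q := {a ∈ U | c a = k ∧ a ∈ B p}) hs
      (fun _ ha => ha.1) fun a ha b hb =>
        ⟨ha.2.1.trans hb.2.1.symm, (hB p a ha.2.2 b hb.2.2).mono (by omega)⟩
    refine (HasWitness.all hcell fun p S T hST h v hv u u' hu' huv =>
      monotone_exchangeable u u' v hST (h v hv u u' hu' huv)).imp le_rfl (by simp) ?_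
    intro S hS v hv hvk u u' hu' huv
    obtain ⟨p, hvp⟩ := hcover v ⟨hv, hvk⟩
    exact hS p v ⟨hv, hvk, hvp⟩ u u' hu' huv
  · obtain ⟨S, hSC, hS3, hS⟩ := hasWitness_forall_exists_far hfar
    refine ⟨S, fun a ha => (hSC ha).1, by omega, fun v _ hvk u u' _ _ => Or.inl ?_⟩
    obtain ⟨w, hwS, hw⟩ := hS u u'
    exact ⟨w, hwS, (hSC hwS).2.trans hvk.symm, hw⟩

theorem exists_hasWitness_adj_of_far (n r : ℕ) (K : Type*) [Finite K] :
    ∃ s : ℕ, ∀ {V : Type u} [Finite V] {G : SimpleGraph V} {c : V → K} {E : V → V → Prop},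
      FarDetermined G r c E → (∀ u v, E u v ↔ E v u) → VCDimLT E n → ∀ U : Set V,
        HasWitness U s fun S => ∀ u, ∀ v ∈ U, ∀ u' ∈ U, ∀ v', ¬ Near G (5 * r) u v →
          ¬ Near G (5 * r) u' v' → (∀ w ∈ S, E u w ↔ E u' w) → (∀ w ∈ S, E v w ↔ E v' w) →
            E u v → E u' v' := by
  obtain ⟨s, hs⟩ := exists_hasWitness_dichotomy n
  refine ⟨Nat.card K * (3 + 2 * (1 + Nat.card K * (s + s))),
    fun {V} _ {G c E} hE hsymm hvc U => ?_⟩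
  have hdich : ∀ A ⊆ U, ∀ B ⊆ U, HasWitness U s (Dichotomy · E A B) := fun A hA B hB =>
    (hs hvc (by simpa only [hsymm] using hvc) A B).imp (Set.union_subset hA hB) le_rfl
      fun _ h => h
  refine (HasWitness.all (hasWitness_exchangeable_of_color (G := G) (r := r) (c := c) hdich)
    fun k S T hST h v hv hvk u u' hu' huv =>
      monotone_exchangeable u u' v hST (h v hv hvk u u' hu' huv)).imp le_rfl le_rfl ?_
  intro S hS u v hv u' hu' v' huv huv'
  exact adj_of_exchangeable hE hsymm (fun h => huv (h.mono (by omega)))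
    (fun h => huv' (h.mono (by omega))) (hS _ v hv rfl u u' hu' huv)
    (hS _ u' hu' rfl v' v hv fun h => huv' h.symm)

theorem exists_hasWitness_flip (n r : ℕ) (K : Type*) [Finite K] :
    ∃ s : ℕ, ∀ {V : Type u} [Finite V] {G : SimpleGraph V} {c : V → K} {E : V → V → Prop},
      FarDetermined G r c E → (∀ u v, E u v ↔ E v u) → VCDimLT E n → ∀ U : Set V,
        HasWitness U s fun S => ∃ R : Set V → Set V → Prop, (∀ X Y, R X Y ↔ R Y X) ∧
          ∀ u ∈ U, ∀ v ∈ U, Xor (E u v) (R {w | w ∈ S ∧ E u w} {w | w ∈ S ∧ E v w}) →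
            Near G (5 * r) u v := by
  obtain ⟨s, hs⟩ := exists_hasWitness_adj_of_far n r K
  refine ⟨s, fun {V} _ {G c E} hE hsymm hvc U => (hs hE hsymm hvc U).imp le_rfl le_rfl ?_⟩
  intro S hS
  let trace (u : V) : Set V := {w | w ∈ S ∧ E u w}
  have adj_congr {u u' : V} (h : trace u = trace u') : ∀ w ∈ S, E u w ↔ E u' w :=
    fun w hw => by simpa [trace, hw] using Set.ext_iff.1 h w
  let R (X Y : Set V) : Prop :=
    ∃ u ∈ U, ∃ v ∈ U, ¬ Near G (5 * r) u v ∧ E u v ∧ trace u = X ∧ trace v = Y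
  have hRsymm {X Y} : R X Y → R Y X := fun ⟨u, hu, v, hv, huv, hadj, hX, hY⟩ =>
    ⟨v, hv, u, hu, fun h => huv h.symm, (hsymm u v).1 hadj, hY, hX⟩
  refine ⟨R, fun X Y => ⟨hRsymm, hRsymm⟩, fun u hu v hv hxor => ?_⟩
  by_contra huv
  obtain ⟨hadj, hR⟩ | ⟨⟨u₀, -, v₀, hv₀, huv₀, hadj₀, hu₀u, hv₀v⟩, hadj⟩ := hxor
  · exact hR ⟨u, hu, v, hv, huv, hadj, rfl, rfl⟩
  · exact hadj (hS u₀ v₀ hv₀ u hu v huv₀ huv (adj_congr hu₀u) (adj_congr hv₀v) hadj₀)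

lemma exists_coloring_farDetermined (φ : Language.graph.Formula (Fin 2)) :
    ∃ (r : ℕ) (K : Type), Finite K ∧ ∀ (V : Type u) (G : SimpleGraph V), ∃ c : V → K,
      letI := G.structure
      FarDetermined G r c fun u v => v ≠ u ∧ φ.Realize ![u, v] := by
  obtain ⟨r, K, hK, h⟩ := exists_coloring_realize_iff_of_pairwise_far φ
  refine ⟨r, K, hK, fun V G => (h V G).imp fun c hc u v u' v' huv huv' hu hv => ?_⟩
  have pairwise_far {x y : V} (hxy : ¬ Near G r x y) (i j : Fin 2) (hij : i ≠ j) :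
      ¬ Near G r (![x, y] i) (![x, y] j) := by
    have hyx : ¬ Near G r y x := fun h => hxy h.symm
    fin_cases i <;> fin_cases j <;> simp_all
  have ne_of_far {x y : V} (hxy : ¬ Near G r x y) : y ≠ x := fun h => hxy (h ▸ Near.refl G r y)
  exact and_congr (iff_of_true (ne_of_far huv) (ne_of_far huv')) <|
    hc _ _ (pairwise_far huv) (pairwise_far huv') (by simp [Fin.forall_fin_two, hu, hv])

end Guard

end GraphFlip

open GraphFlip in
theorem flipping_lemma_general (φ : Language.graph.Formula (Fin 2)) (n : ℕ) :
    ∃ s r : ℕ, ∀ (V : Type u) [Finite V] (G : SimpleGraph V) (U : Set V),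
      letI := G.structure
      VCDimLT (fun u v : V => φ.Realize ![u, v]) n →
      (∀ u v : V, φ.Realize ![u, v] ↔ φ.Realize ![v, u]) →
      ∃ (S : Finset V) (R : Set V → Set V → Prop),
        (S : Set V) ⊆ U ∧ S.card ≤ s ∧ (∀ X Y, R X Y ↔ R Y X) ∧
        ∀ u v, u ∈ U → v ∈ U → u ≠ v →
          Xor (φ.Realize ![u, v])
            (R {w | w ∈ S ∧ w ≠ u ∧ φ.Realize ![u, w]}
               {w | w ∈ S ∧ w ≠ v ∧ φ.Realize ![v, w]}) →
          Near G r u v := by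
  obtain ⟨r, K, _, hcoloring⟩ := exists_coloring_farDetermined φ
  obtain ⟨s, hflip⟩ := exists_hasWitness_flip (n + n) r K
  refine ⟨s, 5 * r, fun V _ G U hvc hsymm => ?_⟩
  obtain ⟨c, hc⟩ := hcoloring V G
  obtain ⟨S, hSU, hSs, R, hR, hSR⟩ :=
    hflip hc (fun u v => and_congr ne_comm (hsymm u v)) hvc.ne_and U
  refine ⟨S, R, hSU, hSs, hR, fun u v hu hv huv hxor => hSR u hu v hv ?_⟩
  rwa [and_iff_right huv.symm]

/-- a step of Lemma 15 of the paper. For every pair of first-order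
formulas `φ(x,y)`, `δ(x)` in the language of graphs and every `d` there exist `s, r : ℕ`
such that: for every finite graph `G` on which `φ` is symmetric and has VC-dimension at
most `d`, letting `U = {v : G ⊨ δ(v)}` and `H` be the graph on `U` where distinct `u, v`
are adjacent iff `G ⊨ φ(u,v)`, there are a set `S ⊆ U` with `|S| ≤ s` and a symmetric
relation `R` on subsets of `S` such that the flip `F` of `H` guarded by `S` determined
by `R` — distinct `u, v ∈ U` adjacent in `F` iff exactly one of `uv ∈ E(H)` and
`(N_H(u) ∩ S, N_H(v) ∩ S) ∈ R` holds — has all its edges joining vertices at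
`G`-distance at most `r`. -/
theorem flipping_lemma (φ : Language.graph.Formula (Fin 2))
    (δ : Language.graph.Formula (Fin 1)) (d : ℕ) :
    ∃ s r : ℕ, ∀ (V : Type) [Fintype V] (G : SimpleGraph V),
      letI := G.structure
      (¬ ∃ (a : Fin (d + 1) → V) (b : Finset (Fin (d + 1)) → V),
          ∀ (i : Fin (d + 1)) (I : Finset (Fin (d + 1))),
            φ.Realize ![a i, b I] ↔ i ∈ I) →
      (∀ u v : V, φ.Realize ![u, v] ↔ φ.Realize ![v, u]) →
      ∃ (S : Finset V) (R : Set V → Set V → Prop),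
        (S : Set V) ⊆ {w | δ.Realize ![w]} ∧ S.card ≤ s ∧
        (∀ X Y : Set V, R X Y ↔ R Y X) ∧
        ∀ u v : V, δ.Realize ![u] → δ.Realize ![v] → u ≠ v →
          Xor' (φ.Realize ![u, v])
            (R {w | w ∈ S ∧ w ≠ u ∧ φ.Realize ![u, w]}
               {w | w ∈ S ∧ w ≠ v ∧ φ.Realize ![v, w]}) →
          G.edist u v ≤ (r : ℕ∞) := by
  obtain ⟨s, r, h⟩ := flipping_lemma_general φ (d + 1)
  exact ⟨s, r, fun V _ G => h V G _⟩
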